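/- Fix μ>0. For all X, Y ∈ ℝ⁴ with N(X) < N(Y) one has the absolutely convergent expansion −1/⟨X̂−Ŷ, X̂−Ŷ⟩₍₁,₄₎ = Σ_{l∈{0,1/2,1,…}} Σ_{m,n=−l}^{l} [ t^l_{m n̲}(X) / ((1+μ²N(X))^{1/2}+1)^{2l+1} ] · [ μ^{4l+2}·t^l_{n m̲}(Y⁺) / ((1+μ²N(Y))^{1/2}−1)^{2l+1} ], the outer sum taken over l = 0, 1/2, 1, 3/2, …. -/

import Mathlib

noncomputable section

/-- `N(X) = (x⁰)² + (x¹)² + (x²)² + (x³)²` for `X ∈ ℝ⁴`. -/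
def Nq (X : Fin 4 → ℝ) : ℝ := ∑ i, X i ^ 2

/-- The indefinite inner product `⟨W,W′⟩₍₁,₄₎` on `ℝ⁵`. -/
def form14 (W W' : Fin 5 → ℝ) : ℝ :=
  W 0 * W' 0 - W 1 * W' 1 - W 2 * W' 2 - W 3 * W' 3 - W 4 * W' 4

/-- `X̂ = (√(μ⁻² + N(X)), x⁰, x¹, x², x³) ∈ ℝ⁵`. -/
def hat (μ : ℝ) (X : Fin 4 → ℝ) : Fin 5 → ℝ :=
  Fin.cons (Real.sqrt ((μ ^ 2)⁻¹ + Nq X)) X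

/-- The matrix `Z(V) = [[v⁰−iv³, −iv¹−v²],[−iv¹+v², v⁰+iv³]]` with `det Z(V) = N(V)`. -/
def Zmat (V : Fin 4 → ℂ) : Matrix (Fin 2) (Fin 2) ℂ :=
  !![V 0 - Complex.I * V 3, -Complex.I * V 1 - V 2;
     -Complex.I * V 1 + V 2, V 0 + Complex.I * V 3]

/-- The matrix coefficient `t^l_{n m̲}(Z)`: here `p = 2l`, `a = l−m`, `b = l−n`, and
`tcoef p a b Z` is the coefficient of `s^b` in `(s z₁₁+z₂₁)^a (s z₁₂+z₂₂)^{p−a}`. -/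
def tcoef (p a b : ℕ) (Z : Matrix (Fin 2) (Fin 2) ℂ) : ℂ :=
  ((Polynomial.C (Z 0 0) * Polynomial.X + Polynomial.C (Z 1 0)) ^ a *
   (Polynomial.C (Z 0 1) * Polynomial.X + Polynomial.C (Z 1 1)) ^ (p - a)).coeff b

/-- `t^l_{n m̲}(X)` for `X ∈ ℝ⁴`. -/
def tcoefR (p a b : ℕ) (X : Fin 4 → ℝ) : ℂ := tcoef p a b (Zmat fun i => (X i : ℂ))

/-- The quaternionic conjugate `X⁺ = (x⁰, −x¹, −x², −x³)`. -/
def qconj (X : Fin 4 → ℝ) : Fin 4 → ℝ := ![X 0, -X 1, -X 2, -X 3]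

/-- The term of the expansion indexed by `l` (encoded `p = 2l`) and `m, n ∈ {−l,…,l}`:
with `a = l−n`, `b = l−m`, it is
`[t^l_{m n̲}(X)/((1+μ²N(X))^{1/2}+1)^{2l+1}] · [μ^{4l+2} t^l_{n m̲}(Y⁺)/((1+μ²N(Y))^{1/2}−1)^{2l+1}]`,
where `t^l_{m n̲}(X) = tcoefR p a b X` and `t^l_{n m̲}(Y⁺) = tcoefR p b a (Y⁺)`. -/
def expTerm (μ : ℝ) (X Y : Fin 4 → ℝ) (q : Σ p : ℕ, Fin (p + 1) × Fin (p + 1)) : ℂ :=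
  (tcoefR q.1 q.2.1 q.2.2 X /
      ((Real.sqrt (1 + μ ^ 2 * Nq X) + 1 : ℝ) : ℂ) ^ (q.1 + 1)) *
  (((μ ^ (2 * q.1 + 2) : ℝ) : ℂ) * tcoefR q.1 q.2.2 q.2.1 (qconj Y) /
      ((Real.sqrt (1 + μ ^ 2 * Nq Y) - 1 : ℝ) : ℂ) ^ (q.1 + 1))

/-!
`t^l(Z)` is the matrix of `Z` on binary forms of degree `p = 2l`, so it is multiplicative and
`∑_{m,n} t^l_{m n̲}(X) t^l_{n m̲}(Y⁺)` is the character `χ_p` of that representation at `Y⁺X`.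
These characters satisfy the Chebyshev-type recursion `χ_{p+2} = tr · χ_{p+1} - det · χ_p`, whence
`∑_p r^{p+1} χ_p(Y⁺X) = r / (1 - 2⟨X,Y⟩ r + N(X) N(Y) r²)`. For
`r = μ² / ((√(1+μ²N(X)) + 1) (√(1+μ²N(Y)) - 1))` the left side is the expansion and the right side
is `-1/⟨X̂-Ŷ, X̂-Ŷ⟩`. Absolute convergence: `t^l(X)` is `N(X)^l` times a unitary map for the
Bombieri inner product (the monomials `s^b` are orthogonal of square norm `1 / C(2l,b)`), which
bounds its entries, and `N(X) < N(Y)` is exactly the condition `r² N(X) N(Y) < 1`.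
-/

open Polynomial Matrix Finset

section Polynomial

variable {R : Type*} [CommSemiring R]

lemma coeff_C_mul_X_add_C_pow (x y : R) (n k : ℕ) :
    ((C x * X + C y) ^ n).coeff k = x ^ k * y ^ (n - k) * n.choose k := by
  have hterm (j : ℕ) : ((C x * X) ^ j * C y ^ (n - j) * (n.choose j : R[X])).coeff k =
      if k = j then x ^ j * y ^ (n - j) * n.choose j else 0 := by
    have hmonomial : (C x * X) ^ j * C y ^ (n - j) * (n.choose j : R[X]) =
        C (x ^ j * y ^ (n - j) * n.choose j) * X ^ j := by
      simp only [C_mul, C_pow, map_natCast]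
      ring
    rw [hmonomial, coeff_C_mul_X_pow]
  rw [add_pow, finsetSum_coeff, sum_congr rfl fun j _ => hterm j, sum_ite_eq]
  split_ifs with hk
  · rfl
  · rw [Nat.choose_eq_zero_of_lt (by simpa using hk), Nat.cast_zero, mul_zero]

lemma coeff_coeff_swap (f : R[X][X]) (i j : ℕ) :
    ((Bivariate.swap (R := R) f).coeff i).coeff j = (f.coeff j).coeff i := by
  induction f using Polynomial.induction_on' with
  | add f g hf hg => simp only [map_add, coeff_add, hf, hg]
  | monomial n f =>
    induction f using Polynomial.induction_on' with
    | add f g hf hg => simp only [map_add, coeff_add, hf, hg]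
    | monomial m c =>
      rw [Bivariate.swap_monomial_monomial]
      simp only [coeff_monomial]
      split_ifs <;> simp_all [coeff_monomial]

lemma aeval_homogenize_eq_sum {S : Type*} [CommSemiring S] [Algebra R S] (f : R[X]) (n : ℕ)
    (A B : S) :
    MvPolynomial.aeval ![A, B] (f.homogenize n) =
      ∑ i ∈ range (n + 1), algebraMap R S (f.coeff i) * (A ^ i * B ^ (n - i)) := by
  rw [homogenize, map_sum, Nat.sum_antidiagonal_eq_sum_range_succ_mk]
  refine sum_congr rfl fun i _ => ?_
  rw [MvPolynomial.aeval_monomial, Finsupp.prod_fintype _ _ (by simp)]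
  simp [Fin.prod_univ_two]

lemma homogenize_linear_pow_mul_linear_pow (z w u v : R) (m n : ℕ) :
    ((C z * X + C w) ^ m * (C u * X + C v) ^ n : R[X]).homogenize (m + n) =
      (MvPolynomial.C z * MvPolynomial.X 0 + MvPolynomial.C w * MvPolynomial.X 1) ^ m *
        (MvPolynomial.C u * MvPolynomial.X 0 + MvPolynomial.C v * MvPolynomial.X 1) ^ n := by
  have hlinear (z w : R) : (MvPolynomial.C z * MvPolynomial.X 0 +
      MvPolynomial.C w * MvPolynomial.X 1 : MvPolynomial (Fin 2) R).IsHomogeneous 1 :=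
    (MvPolynomial.isHomogeneous_C_mul_X z 0).add (MvPolynomial.isHomogeneous_C_mul_X w 1)
  apply homogenize_eq_of_isHomogeneous
  · simpa only [one_mul] using ((hlinear z w).pow m).mul ((hlinear u v).pow n)
  · simp [Polynomial.algebraMap_eq]

end Polynomial

section MatrixCoefficients

variable {p a b : ℕ} {Z W : Matrix (Fin 2) (Fin 2) ℂ}

lemma sum_tcoef_mul_pow_mul_pow (ha : a ≤ p) (Z : Matrix (Fin 2) (Fin 2) ℂ) (A B : ℂ[X]) :
    ∑ b ∈ range (p + 1), C (tcoef p a b Z) * (A ^ b * B ^ (p - b)) =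
      (C (Z 0 0) * A + C (Z 1 0) * B) ^ a * (C (Z 0 1) * A + C (Z 1 1) * B) ^ (p - a) := by
  have h := homogenize_linear_pow_mul_linear_pow (Z 0 0) (Z 1 0) (Z 0 1) (Z 1 1) a (p - a)
  rw [Nat.add_sub_cancel' ha] at h
  have h := congrArg (MvPolynomial.aeval ![A, B]) h
  rw [aeval_homogenize_eq_sum] at h
  simpa [tcoef, Polynomial.algebraMap_eq] using h

lemma sum_tcoef_mul_tcoef (ha : a ≤ p) (Z W : Matrix (Fin 2) (Fin 2) ℂ) (c : ℕ) :
    ∑ b ∈ range (p + 1), tcoef p a b Z * tcoef p b c W = tcoef p a c (W * Z) := by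
  have h := congrArg (coeff · c) (sum_tcoef_mul_pow_mul_pow ha Z
    (C (W 0 0) * X + C (W 1 0)) (C (W 0 1) * X + C (W 1 1)))
  simp only [finsetSum_coeff, coeff_C_mul] at h
  refine h.trans ?_
  simp only [tcoef, Matrix.mul_apply, Fin.sum_univ_two, map_add, map_mul]
  congr 3 <;> ring

lemma choose_mul_tcoef_eq_coeff_coeff (p a b : ℕ) (Z : Matrix (Fin 2) (Fin 2) ℂ) :
    p.choose a * tcoef p a b Z =
      (((C (C (Z 0 0) * X + C (Z 1 0)) * X + C (C (Z 0 1) * X + C (Z 1 1)) : ℂ[X][X]) ^ p).coeff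
        a).coeff b := by
  rw [coeff_C_mul_X_add_C_pow, tcoef, ← C_eq_natCast, coeff_mul_C, mul_comm]

lemma choose_mul_tcoef_transpose (p a b : ℕ) (Z : Matrix (Fin 2) (Fin 2) ℂ) :
    p.choose b * tcoef p b a Zᵀ = p.choose a * tcoef p a b Z := by
  have hswap : Bivariate.swap (R := ℂ)
      (C (C (Zᵀ 0 0) * X + C (Zᵀ 1 0)) * X + C (C (Zᵀ 0 1) * X + C (Zᵀ 1 1))) =
        C (C (Z 0 0) * X + C (Z 1 0)) * X + C (C (Z 0 1) * X + C (Z 1 1)) := by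
    simp only [map_add, map_mul, Bivariate.swap_X, Bivariate.swap_Y, Bivariate.swap_C_C,
      transpose_apply]
    ring
  rw [choose_mul_tcoef_eq_coeff_coeff, choose_mul_tcoef_eq_coeff_coeff, ← coeff_coeff_swap,
    map_pow, hswap]

lemma tcoef_map_star (p a b : ℕ) (Z : Matrix (Fin 2) (Fin 2) ℂ) :
    tcoef p a b (Z.map star) = star (tcoef p a b Z) := by
  have hcoeff (f : ℂ[X]) : star (f.coeff b) = (f.map (starRingEnd ℂ)).coeff b := by simp
  simp [tcoef, hcoeff]

lemma choose_mul_tcoef_conjTranspose (p a b : ℕ) (Z : Matrix (Fin 2) (Fin 2) ℂ) :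
    p.choose b * tcoef p b a Zᴴ = p.choose a * star (tcoef p a b Z) := by
  have h := congrArg star (choose_mul_tcoef_transpose p a b Z)
  rwa [star_mul', star_mul', star_natCast, star_natCast, ← tcoef_map_star] at h

lemma sum_choose_mul_norm_tcoef_sq (ha : a ≤ p) (Z : Matrix (Fin 2) (Fin 2) ℂ) :
    ((∑ b ∈ range (p + 1), p.choose a / p.choose b * ‖tcoef p a b Z‖ ^ 2 : ℝ) : ℂ) =
      tcoef p a a (Zᴴ * Z) := by
  rw [← sum_tcoef_mul_tcoef ha, Complex.ofReal_sum]
  refine sum_congr rfl fun b hb => ?_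
  have hchoose : (p.choose b : ℂ) ≠ 0 := by
    exact_mod_cast (Nat.choose_pos (Nat.lt_succ_iff.1 (mem_range.1 hb))).ne'
  have hadjoint := choose_mul_tcoef_conjTranspose p a b Z
  push_cast
  rw [← Complex.mul_conj', starRingEnd_apply]
  field_simp
  linear_combination -(tcoef p a b Z) * hadjoint

lemma tcoef_smul_one_self (ha : a ≤ p) (c : ℂ) :
    tcoef p a a (c • (1 : Matrix (Fin 2) (Fin 2) ℂ)) = c ^ p := by
  have hpoly : (C c * X) ^ a * C c ^ (p - a) = C (c ^ p) * X ^ a := by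
    rw [mul_pow, mul_right_comm, ← pow_add, Nat.add_sub_cancel' ha, C_pow]
  simp [tcoef, hpoly, coeff_C_mul, -map_pow]

lemma choose_mul_norm_tcoef_sq_le (ha : a ≤ p) (hb : b ≤ p) {N : ℝ}
    (hZ : Zᴴ * Z = (N : ℂ) • (1 : Matrix (Fin 2) (Fin 2) ℂ)) :
    p.choose a * ‖tcoef p a b Z‖ ^ 2 ≤ p.choose b * N ^ p := by
  have hsum : ∑ b ∈ range (p + 1), p.choose a / p.choose b * ‖tcoef p a b Z‖ ^ 2 = N ^ p := by
    have h := sum_choose_mul_norm_tcoef_sq ha Z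
    rw [hZ, tcoef_smul_one_self ha] at h
    exact_mod_cast h
  have hchoose : (0 : ℝ) < p.choose b := by exact_mod_cast Nat.choose_pos hb
  calc (p.choose a : ℝ) * ‖tcoef p a b Z‖ ^ 2
      = p.choose b * (p.choose a / p.choose b * ‖tcoef p a b Z‖ ^ 2) := by field_simp
    _ ≤ p.choose b * ∑ b ∈ range (p + 1), p.choose a / p.choose b * ‖tcoef p a b Z‖ ^ 2 := by
      gcongr
      exact single_le_sum (f := fun b => p.choose a / p.choose b * ‖tcoef p a b Z‖ ^ 2)
        (fun _ _ => by positivity) (mem_range.2 (Nat.lt_succ_of_le hb))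
    _ = p.choose b * N ^ p := by rw [hsum]

lemma norm_tcoef_mul_tcoef_sq_le (ha : a ≤ p) (hb : b ≤ p) {N N' : ℝ}
    (hZ : Zᴴ * Z = (N : ℂ) • (1 : Matrix (Fin 2) (Fin 2) ℂ))
    (hW : Wᴴ * W = (N' : ℂ) • (1 : Matrix (Fin 2) (Fin 2) ℂ)) :
    ‖tcoef p a b Z * tcoef p b a W‖ ^ 2 ≤ (N * N') ^ p := by
  have hZ' := choose_mul_norm_tcoef_sq_le ha hb hZ
  have hW' := choose_mul_norm_tcoef_sq_le hb ha hW
  have hprod := mul_le_mul hZ' hW' (by positivity) (le_trans (by positivity) hZ')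
  have hchoose : (0 : ℝ) < p.choose a * p.choose b := by
    exact_mod_cast Nat.mul_pos (Nat.choose_pos ha) (Nat.choose_pos hb)
  refine le_of_mul_le_mul_left ?_ hchoose
  rw [norm_mul, mul_pow, mul_pow]
  linarith

end MatrixCoefficients

section Character

variable (M : Matrix (Fin 2) (Fin 2) ℂ)

/-- The character `χ_l(M) = ∑ₘ t^l_{m m̲}(M)` of the spin-`l` representation, with `p = 2l`. -/
def symChar (p : ℕ) : ℂ := ∑ a ∈ range (p + 1), tcoef p a a M

/-- The sum `∑ₘ t^l_{n m̲}(M)` over the entries with `n = m - 1`, where `p = 2l`; it closes up the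
recursion for `symChar`. The entry `a = p` lies outside the matrix and vanishes. -/
def symOffDiagSum (p : ℕ) : ℂ := ∑ a ∈ range (p + 1), tcoef p a (a + 1) M

lemma tcoef_succ_succ_succ (p a b : ℕ) :
    tcoef (p + 1) (a + 1) (b + 1) M = M 0 0 * tcoef p a b M + M 1 0 * tcoef p a (b + 1) M := by
  rw [tcoef, Nat.add_sub_add_right, pow_succ', mul_assoc, add_mul, mul_assoc, coeff_add,
    coeff_C_mul, coeff_X_mul, coeff_C_mul]
  rfl

lemma tcoef_succ_right {p a : ℕ} (ha : a ≤ p) (b : ℕ) :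
    tcoef (p + 1) a (b + 1) M = M 0 1 * tcoef p a b M + M 1 1 * tcoef p a (b + 1) M := by
  rw [tcoef, Nat.succ_sub ha, pow_succ', mul_left_comm, add_mul, mul_assoc, coeff_add,
    coeff_C_mul, coeff_X_mul, coeff_C_mul]
  rfl

lemma tcoef_zero_zero (p : ℕ) : tcoef p 0 0 M = M 1 1 ^ p := by
  simp [tcoef, coeff_C_mul_X_add_C_pow]

lemma tcoef_self_succ (p : ℕ) : tcoef p p (p + 1) M = 0 := by
  simp [tcoef, coeff_C_mul_X_add_C_pow]

lemma symChar_succ (p : ℕ) :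
    symChar M (p + 1) = M 0 0 * symChar M p + M 1 0 * symOffDiagSum M p + M 1 1 ^ (p + 1) := by
  simp only [symChar, symOffDiagSum]
  rw [sum_range_succ', tcoef_zero_zero]
  simp only [tcoef_succ_succ_succ, sum_add_distrib, mul_sum]

lemma symOffDiagSum_succ (p : ℕ) :
    symOffDiagSum M (p + 1) = M 0 1 * symChar M p + M 1 1 * symOffDiagSum M p := by
  simp only [symChar, symOffDiagSum]
  rw [sum_range_succ, tcoef_self_succ, add_zero, mul_sum, mul_sum, ← sum_add_distrib]
  exact sum_congr rfl fun a ha => tcoef_succ_right M (Nat.lt_succ_iff.1 (mem_range.1 ha)) a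

lemma symChar_add_two (p : ℕ) :
    symChar M (p + 2) = M.trace * symChar M (p + 1) - M.det * symChar M p := by
  rw [symChar_succ M (p + 1), symOffDiagSum_succ, trace_fin_two, det_fin_two]
  linear_combination -M 1 1 * symChar_succ M p

lemma symChar_zero : symChar M 0 = 1 := by
  simp [symChar, tcoef]

lemma symChar_one : symChar M 1 = M.trace := by
  simp [symChar, tcoef, sum_range_succ, trace_fin_two, add_comm]

variable {M}

lemma mul_eq_of_hasSum_pow_mul_symChar {r S : ℂ}
    (h : HasSum (fun p => r ^ (p + 1) * symChar M p) S) :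
    S * (1 - M.trace * r + M.det * r ^ 2) = r := by
  have htail₁ := (hasSum_nat_add_iff' 1).2 h
  have htail₂ := (hasSum_nat_add_iff' 2).2 h
  have hrec : (fun p => r ^ (p + 2 + 1) * symChar M (p + 2)) = fun p =>
      M.trace * r * (r ^ (p + 1 + 1) * symChar M (p + 1)) -
        M.det * r ^ 2 * (r ^ (p + 1) * symChar M p) := by
    funext p
    rw [symChar_add_two]
    ring
  rw [hrec] at htail₂
  have hsums := htail₂.unique ((htail₁.mul_left (M.trace * r)).sub (h.mul_left (M.det * r ^ 2)))
  simp only [sum_range_succ, sum_range_zero, symChar_zero, symChar_one] at hsums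
  linear_combination hsums

lemma sum_tcoef_mul_tcoef_eq_symChar (p : ℕ) (Z W : Matrix (Fin 2) (Fin 2) ℂ) :
    ∑ x : Fin (p + 1) × Fin (p + 1), tcoef p x.1 x.2 Z * tcoef p x.2 x.1 W =
      symChar (W * Z) p := by
  rw [Fintype.sum_prod_type, symChar, sum_range]
  refine sum_congr rfl fun a _ => ?_
  rw [← sum_tcoef_mul_tcoef (Nat.lt_succ_iff.1 a.2), sum_range]

lemma hasSum_pow_mul_tcoef_mul_tcoef {Z W : Matrix (Fin 2) (Fin 2) ℂ} {r : ℂ}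
    (h : Summable fun q : Σ p : ℕ, Fin (p + 1) × Fin (p + 1) =>
      r ^ (q.1 + 1) * (tcoef q.1 q.2.1 q.2.2 Z * tcoef q.1 q.2.2 q.2.1 W)) :
    HasSum (fun q : Σ p : ℕ, Fin (p + 1) × Fin (p + 1) =>
        r ^ (q.1 + 1) * (tcoef q.1 q.2.1 q.2.2 Z * tcoef q.1 q.2.2 q.2.1 W))
      (r / (1 - (W * Z).trace * r + (W * Z).det * r ^ 2)) := by
  obtain ⟨S, hS⟩ := h
  have hchar : HasSum (fun p => r ^ (p + 1) * symChar (W * Z) p) S := by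
    simpa only [← mul_sum, sum_tcoef_mul_tcoef_eq_symChar] using
      hS.sigma fun p => hasSum_fintype _
  have hmul := mul_eq_of_hasSum_pow_mul_symChar hchar
  have hdenom : 1 - (W * Z).trace * r + (W * Z).det * r ^ 2 ≠ 0 := by
    intro h0
    have hr : r = 0 := by rw [← hmul, h0, mul_zero]
    simp [hr] at h0
  rwa [← eq_div_of_mul_eq hdenom hmul]

end Character

lemma summable_sigma_fin_prod_fin_geometric {k : ℝ} (hk₀ : 0 ≤ k) (hk₁ : k < 1) :
    Summable fun q : Σ p : ℕ, Fin (p + 1) × Fin (p + 1) => k ^ q.1 := by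
  rw [summable_sigma_of_nonneg fun q => by positivity]
  refine ⟨fun p => Summable.of_finite, ?_⟩
  have hpow (i : ℕ) := summable_pow_mul_geometric_of_norm_lt_one i
    (show ‖k‖ < 1 by rwa [Real.norm_of_nonneg hk₀])
  refine (((hpow 2).add ((hpow 1).mul_left 2)).add (hpow 0)).congr fun p => ?_
  simp only [tsum_fintype, sum_const, card_univ, Fintype.card_prod, Fintype.card_fin, nsmul_eq_mul]
  push_cast
  ring

section Quaternion

lemma Nq_nonneg (X : Fin 4 → ℝ) : 0 ≤ Nq X :=
  sum_nonneg fun i _ => sq_nonneg (X i)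

lemma Nq_qconj (X : Fin 4 → ℝ) : Nq (qconj X) = Nq X := by
  simp [Nq, qconj, Fin.sum_univ_four]

lemma det_Zmat (V : Fin 4 → ℂ) : (Zmat V).det = ∑ i, V i ^ 2 := by
  rw [det_fin_two, Fin.sum_univ_four]
  simp only [Zmat, of_apply, cons_val', cons_val_zero, cons_val_one, cons_val_fin_one]
  linear_combination (-V 1 ^ 2 - V 3 ^ 2) * Complex.I_sq

lemma det_Zmat_ofReal (X : Fin 4 → ℝ) : (Zmat fun i => (X i : ℂ)).det = (Nq X : ℂ) := by
  simp only [det_Zmat, Nq, Complex.ofReal_sum, Complex.ofReal_pow]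

lemma conjTranspose_Zmat_ofReal (X : Fin 4 → ℝ) :
    (Zmat fun i => (X i : ℂ))ᴴ = (Zmat fun i => (X i : ℂ)).adjugate := by
  ext i j
  fin_cases i <;> fin_cases j <;> simp [Zmat, adjugate_fin_two, sub_eq_add_neg, add_comm]

lemma conjTranspose_Zmat_mul_Zmat (X : Fin 4 → ℝ) :
    (Zmat fun i => (X i : ℂ))ᴴ * (Zmat fun i => (X i : ℂ)) =
      (Nq X : ℂ) • (1 : Matrix (Fin 2) (Fin 2) ℂ) := by
  rw [conjTranspose_Zmat_ofReal, adjugate_mul, det_Zmat_ofReal]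

lemma trace_Zmat_qconj_mul_Zmat (X Y : Fin 4 → ℝ) :
    ((Zmat fun i => (qconj Y i : ℂ)) * (Zmat fun i => (X i : ℂ))).trace =
      ((2 * X ⬝ᵥ Y : ℝ) : ℂ) := by
  rw [trace_fin_two]
  simp only [Zmat, qconj, Matrix.mul_apply, of_apply, cons_val', cons_val_zero, cons_val_one,
    cons_val_fin_one, Matrix.cons_val, dotProduct, Fin.sum_univ_two, Fin.sum_univ_four]
  push_cast
  linear_combination (-2 * X 1 * Y 1 - 2 * X 3 * Y 3 : ℂ) * Complex.I_sq

lemma summable_norm_pow_mul_tcoefR_mul_tcoefR {X Y : Fin 4 → ℝ} {r : ℂ}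
    (hr : ‖r‖ ^ 2 * (Nq X * Nq Y) < 1) :
    Summable fun q : Σ p : ℕ, Fin (p + 1) × Fin (p + 1) =>
      ‖r ^ (q.1 + 1) * (tcoefR q.1 q.2.1 q.2.2 X * tcoefR q.1 q.2.2 q.2.1 Y)‖ := by
  have hN : 0 ≤ Nq X * Nq Y := mul_nonneg (Nq_nonneg X) (Nq_nonneg Y)
  set k := ‖r‖ * √(Nq X * Nq Y) with hk
  have hk₁ : k < 1 := by
    rwa [← sq_lt_one_iff₀ (by positivity), mul_pow, Real.sq_sqrt hN]
  refine .of_nonneg_of_le (fun _ => norm_nonneg _) (fun q => ?_)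
    ((summable_sigma_fin_prod_fin_geometric (by positivity) hk₁).mul_left ‖r‖)
  have hentries : ‖tcoefR q.1 q.2.1 q.2.2 X * tcoefR q.1 q.2.2 q.2.1 Y‖ ≤
      √(Nq X * Nq Y) ^ q.1 := by
    refine (sq_le_sq₀ (norm_nonneg _) (by positivity)).1 ?_
    rw [← pow_mul, mul_comm q.1, pow_mul, Real.sq_sqrt hN]
    exact norm_tcoef_mul_tcoef_sq_le (Nat.lt_succ_iff.1 q.2.1.2) (Nat.lt_succ_iff.1 q.2.2.2)
      (conjTranspose_Zmat_mul_Zmat X) (conjTranspose_Zmat_mul_Zmat Y)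
  calc ‖r ^ (q.1 + 1) * (tcoefR q.1 q.2.1 q.2.2 X * tcoefR q.1 q.2.2 q.2.1 Y)‖
      ≤ ‖r‖ ^ (q.1 + 1) * √(Nq X * Nq Y) ^ q.1 := by
        rw [norm_mul, norm_pow]
        gcongr
    _ = ‖r‖ * k ^ q.1 := by rw [hk]; ring

lemma hasSum_pow_mul_tcoefR_mul_tcoefR_qconj {X Y : Fin 4 → ℝ} {r : ℝ}
    (hr : r ^ 2 * (Nq X * Nq Y) < 1) :
    HasSum (fun q : Σ p : ℕ, Fin (p + 1) × Fin (p + 1) =>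
        (r : ℂ) ^ (q.1 + 1) * (tcoefR q.1 q.2.1 q.2.2 X * tcoefR q.1 q.2.2 q.2.1 (qconj Y)))
      ((r / (1 - 2 * X ⬝ᵥ Y * r + Nq X * Nq Y * r ^ 2) : ℝ) : ℂ) := by
  have hnorm : ‖(r : ℂ)‖ ^ 2 * (Nq X * Nq (qconj Y)) < 1 := by
    rwa [Complex.norm_real, Real.norm_eq_abs, sq_abs, Nq_qconj]
  have h := hasSum_pow_mul_tcoef_mul_tcoef
    (summable_norm_pow_mul_tcoefR_mul_tcoefR hnorm).of_norm
  rw [trace_Zmat_qconj_mul_Zmat, det_mul, det_Zmat_ofReal, det_Zmat_ofReal, Nq_qconj,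
    mul_comm (Nq Y : ℂ)] at h
  exact_mod_cast h

end Quaternion

section Hyperboloid

variable {μ : ℝ} {X Y : Fin 4 → ℝ}

/-- The time coordinate `√(1 + μ² N(X))` of the point `μ X̂` of the unit hyperboloid (`μ > 0`). -/
def hypHeight (μ : ℝ) (X : Fin 4 → ℝ) : ℝ := √(1 + μ ^ 2 * Nq X)

/-- The variable `r` in which the expansion is a power series: the terms of level `l` carry the
factor `r^{2l+1}`. -/
def expRatio (μ : ℝ) (X Y : Fin 4 → ℝ) : ℝ :=
  μ ^ 2 / ((hypHeight μ X + 1) * (hypHeight μ Y - 1))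

lemma expTerm_eq_expRatio_pow_mul (μ : ℝ) (X Y : Fin 4 → ℝ)
    (q : Σ p : ℕ, Fin (p + 1) × Fin (p + 1)) :
    expTerm μ X Y q = (expRatio μ X Y : ℂ) ^ (q.1 + 1) *
      (tcoefR q.1 q.2.1 q.2.2 X * tcoefR q.1 q.2.2 q.2.1 (qconj Y)) := by
  simp only [expTerm, expRatio, hypHeight]
  push_cast
  rw [div_pow, mul_pow, ← pow_mul, show 2 * q.1 + 2 = 2 * (q.1 + 1) by ring, div_mul_div_comm]
  ring

lemma hypHeight_sq (μ : ℝ) (X : Fin 4 → ℝ) : hypHeight μ X ^ 2 = 1 + μ ^ 2 * Nq X :=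
  Real.sq_sqrt (by have := Nq_nonneg X; positivity)

lemma one_le_hypHeight (μ : ℝ) (X : Fin 4 → ℝ) : 1 ≤ hypHeight μ X :=
  Real.one_le_sqrt.2 (le_add_of_nonneg_right (mul_nonneg (sq_nonneg μ) (Nq_nonneg X)))

lemma hypHeight_lt_hypHeight (hμ : μ ≠ 0) (hXY : Nq X < Nq Y) :
    hypHeight μ X < hypHeight μ Y := by
  have := Nq_nonneg X
  exact Real.sqrt_lt_sqrt (by positivity) (by gcongr)

lemma Nq_eq_hypHeight_sq_sub_one_div (hμ : μ ≠ 0) (X : Fin 4 → ℝ) :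
    Nq X = (hypHeight μ X ^ 2 - 1) / μ ^ 2 := by
  rw [hypHeight_sq, add_sub_cancel_left, mul_div_cancel_left₀ _ (pow_ne_zero 2 hμ)]

lemma form14_self (V : Fin 5 → ℝ) : form14 V V = V 0 ^ 2 - Nq (Fin.tail V) := by
  simp only [form14, Nq, Fin.tail, Fin.sum_univ_four, Fin.reduceSucc, Fin.succ_zero_eq_one]
  ring

lemma hat_zero_eq_hypHeight_div (hμ : μ ≠ 0) (X : Fin 4 → ℝ) :
    hat μ X 0 = hypHeight μ X / |μ| := by
  rw [hypHeight, ← Real.sqrt_sq_eq_abs, ← Real.sqrt_div' _ (sq_nonneg μ)]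
  simp only [hat, Fin.cons_zero]
  congr 1
  field_simp

lemma form14_hat_sub_hat (hμ : μ ≠ 0) (X Y : Fin 4 → ℝ) :
    form14 (hat μ X - hat μ Y) (hat μ X - hat μ Y) =
      2 * (1 - hypHeight μ X * hypHeight μ Y) / μ ^ 2 + 2 * X ⬝ᵥ Y := by
  have htail : Fin.tail (hat μ X - hat μ Y) = X - Y := rfl
  have hNq : Nq (X - Y) = Nq X + Nq Y - 2 * X ⬝ᵥ Y := by
    simp only [Nq, dotProduct, Fin.sum_univ_four, Pi.sub_apply]
    ring
  rw [form14_self, htail, hNq, Pi.sub_apply, hat_zero_eq_hypHeight_div hμ,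
    hat_zero_eq_hypHeight_div hμ, ← sub_div, div_pow, sq_abs, Nq_eq_hypHeight_sq_sub_one_div hμ X,
    Nq_eq_hypHeight_sq_sub_one_div hμ Y]
  ring

lemma expRatio_sq_mul_Nq_mul_Nq (hμ : μ ≠ 0) (hY : 1 < hypHeight μ Y) :
    expRatio μ X Y ^ 2 * (Nq X * Nq Y) =
      ((hypHeight μ X - 1) * (hypHeight μ Y + 1)) /
        ((hypHeight μ X + 1) * (hypHeight μ Y - 1)) := by
  have hX : hypHeight μ X + 1 ≠ 0 := by linarith [one_le_hypHeight μ X]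
  have hY' : hypHeight μ Y - 1 ≠ 0 := by linarith
  rw [expRatio, Nq_eq_hypHeight_sq_sub_one_div hμ X, Nq_eq_hypHeight_sq_sub_one_div hμ Y]
  field_simp
  ring

lemma expRatio_sq_mul_lt_one (hμ : μ ≠ 0) (hXY : Nq X < Nq Y) :
    expRatio μ X Y ^ 2 * (Nq X * Nq Y) < 1 := by
  have hX := one_le_hypHeight μ X
  have hlt := hypHeight_lt_hypHeight hμ hXY
  rw [expRatio_sq_mul_Nq_mul_Nq hμ (hX.trans_lt hlt),
    div_lt_one (mul_pos (by linarith) (by linarith))]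
  linarith

lemma expRatio_div_eq_neg_inv_form14 (hμ : μ ≠ 0) (hY : 1 < hypHeight μ Y) :
    expRatio μ X Y / (1 - 2 * X ⬝ᵥ Y * expRatio μ X Y + Nq X * Nq Y * expRatio μ X Y ^ 2) =
      -(form14 (hat μ X - hat μ Y) (hat μ X - hat μ Y))⁻¹ := by
  have hX : hypHeight μ X + 1 ≠ 0 := by linarith [one_le_hypHeight μ X]
  have hY' : hypHeight μ Y - 1 ≠ 0 := by linarith
  have hr : expRatio μ X Y ≠ 0 :=
    div_ne_zero (pow_ne_zero 2 hμ) (mul_ne_zero hX hY')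
  have hdenom : 1 - 2 * X ⬝ᵥ Y * expRatio μ X Y + Nq X * Nq Y * expRatio μ X Y ^ 2 =
      expRatio μ X Y * -form14 (hat μ X - hat μ Y) (hat μ X - hat μ Y) := by
    rw [mul_comm (Nq X * Nq Y), expRatio_sq_mul_Nq_mul_Nq hμ hY, form14_hat_sub_hat hμ, expRatio]
    field_simp
    ring
  rw [hdenom, ← inv_neg, div_mul_cancel_left₀ hr]

end Hyperboloid

/-- For `μ > 0` and `N(X) < N(Y)`, the expansion
`−1/⟨X̂−Ŷ, X̂−Ŷ⟩₍₁,₄₎ = Σ_l Σ_{m,n} [t^l_{m n̲}(X)/((1+μ²N(X))^{1/2}+1)^{2l+1}] ·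
[μ^{4l+2} t^l_{n m̲}(Y⁺)/((1+μ²N(Y))^{1/2}−1)^{2l+1}]` converges absolutely. -/
theorem stmt10 (μ : ℝ) (hμ : 0 < μ) (X Y : Fin 4 → ℝ) (hXY : Nq X < Nq Y) :
    Summable (fun q : Σ p : ℕ, Fin (p + 1) × Fin (p + 1) => ‖expTerm μ X Y q‖) ∧
    HasSum (expTerm μ X Y)
      ((-(form14 (hat μ X - hat μ Y) (hat μ X - hat μ Y))⁻¹ : ℝ) : ℂ) := by
  have hr := expRatio_sq_mul_lt_one hμ.ne' hXY
  have hY : 1 < hypHeight μ Y :=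
    (one_le_hypHeight μ X).trans_lt (hypHeight_lt_hypHeight hμ.ne' hXY)
  have hsum := hasSum_pow_mul_tcoefR_mul_tcoefR_qconj hr
  rw [expRatio_div_eq_neg_inv_form14 hμ.ne' hY] at hsum
  simp only [← expTerm_eq_expRatio_pow_mul] at hsum
  exact ⟨hsum.summable.norm, hsum⟩
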